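/- arXiv:2503.19181 — 3 statements merged into one kernel-verified Lean document; each statement's English description precedes it below -/
import Mathlib

section
/- Let E ⊆ (Fin m → ZMod 2) and F ⊆ (Fin k → ZMod 2) be point sets of binary matroids and let τ : E → F be any function. The following are equivalent: (i) ∑_{e ∈ Z} τ(e) = 0 for every circuit Z of E; (ii) ∑_{e ∈ Z} τ(e) = 0 for every cycle Z of E; (iii) there exists a ZMod 2-linear map T : (Fin m → ZMod 2) → (Fin k → ZMod 2) with T e = τ e for every e ∈ E. -/
/-- A circuit of a binary matroid with point set `E`: a minimal nonempty subset summing to 0. -/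
def IsCircuit {P : Type*} [AddCommGroup P] (E Z : Finset P) : Prop :=
  Z ⊆ E ∧ Z.Nonempty ∧ ∑ e ∈ Z, e = 0 ∧
    ∀ Z' ⊆ Z, Z'.Nonempty → ∑ e ∈ Z', e = 0 → Z' = Z

/-- A cocircuit: a minimal nonempty subset meeting every circuit evenly. -/
def IsCocircuit {P : Type*} [AddCommGroup P] [DecidableEq P] (E C : Finset P) : Prop :=
  C ⊆ E ∧ C.Nonempty ∧ (∀ Z, IsCircuit E Z → Even (C ∩ Z).card) ∧
    ∀ C' ⊆ C, C'.Nonempty → (∀ Z, IsCircuit E Z → Even (C' ∩ Z).card) → C' = C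

/-- A matroid homomorphism from the matroid on `E` to the matroid on `F`. -/
def IsMHom {P Q : Type*} [AddCommGroup P] [AddCommGroup Q]
    (E : Finset P) (F : Finset Q) (τ : P → Q) : Prop :=
  (∀ e ∈ E, τ e ∈ F) ∧ ∀ Z, IsCircuit E Z → ∑ e ∈ Z, τ e = 0

/-- Adjacency in the recolouring graph: the maps differ exactly on a cocircuit. -/
def MAdj {P Q : Type*} [AddCommGroup P] [AddCommGroup Q] [DecidableEq P]
    (E : Finset P) (τ τ' : P → Q) : Prop :=
  ∃ C, IsCocircuit E C ∧ ∀ e ∈ E, (τ e ≠ τ' e ↔ e ∈ C)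

/-- One step of a walk in `mCol(E,F)`: both maps are homomorphisms and they are
equal (as maps on `E`) or adjacent. -/
def MStep {P Q : Type*} [AddCommGroup P] [AddCommGroup Q] [DecidableEq P]
    (E : Finset P) (F : Finset Q) (τ τ' : P → Q) : Prop :=
  IsMHom E F τ ∧ IsMHom E F τ' ∧ ((∀ e ∈ E, τ e = τ' e) ∨ MAdj E τ τ')

/-- Joined by a walk in the recolouring graph `mCol(E,F)`. -/
def MWalk {P Q : Type*} [AddCommGroup P] [AddCommGroup Q] [DecidableEq P]
    (E : Finset P) (F : Finset Q) : (P → Q) → (P → Q) → Prop :=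
  Relation.ReflTransGen (MStep E F)

/-- The indicator vector of a vertex. -/
def ind {V : Type*} [DecidableEq V] (u : V) : V → ZMod 2 := Pi.single u 1

/-- The decision graph of a set `F` of nonzero vectors. -/
def decisionGraph {m : ℕ} (F : Finset (Fin m → ZMod 2)) : SimpleGraph (Fin m → ZMod 2) where
  Adj v w := v + w ∈ F ∧ v ≠ w
  symm := by
    refine ⟨?_⟩
    intro v w h
    exact ⟨by rw [add_comm]; exact h.1, h.2.symm⟩
  loopless := by
    refine ⟨?_⟩
    intro v h
    exact h.2 rfl

/-- The weight of a vector: its number of nonzero coordinates. -/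
def wt {n : ℕ} (e : Fin n → ZMod 2) : ℕ := (Finset.univ.filter fun i => e i ≠ 0).card


theorem stmt0 (m k : ℕ) (E : Finset (Fin m → ZMod 2)) (F : Finset (Fin k → ZMod 2))
    (τ : (Fin m → ZMod 2) → (Fin k → ZMod 2)) (hτ : ∀ e ∈ E, τ e ∈ F) :
    List.TFAE
      [ (∀ Z, IsCircuit E Z → ∑ e ∈ Z, τ e = 0),
        (∀ Z ⊆ E, ∑ e ∈ Z, e = 0 → ∑ e ∈ Z, τ e = 0),
        (∃ T : (Fin m → ZMod 2) →ₗ[ZMod 2] (Fin k → ZMod 2), ∀ e ∈ E, T e = τ e) ] := by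
  classical
  tfae_have 1 → 2 := by
    intro h Z
    induction Z using Finset.strongInduction with
    | H Z ih =>
      intro hZ h0
      rcases Z.eq_empty_or_nonempty with rfl | hne
      · simp
      by_cases hc : IsCircuit E Z
      · exact h Z hc
      · have : ∃ Z' ⊆ Z, Z'.Nonempty ∧ ∑ e ∈ Z', e = 0 ∧ Z' ≠ Z := by
          by_contra hcon
          push Not at hcon
          exact hc ⟨hZ, hne, h0, hcon⟩
        obtain ⟨Z', hs, hne', h0', hneq⟩ := this
        have h1 := Finset.sum_sdiff (f := fun e => e) hs
        have h2 := Finset.sum_sdiff (f := τ) hs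
        have hd : ∑ e ∈ Z \ Z', e = 0 := by
          simpa [h0, h0'] using h1
        rw [← h2, ih (Z \ Z') (Finset.sdiff_ssubset hs hne') (Finset.sdiff_subset.trans hZ) hd,
          ih Z' (lt_of_le_of_ne hs hneq) (hs.trans hZ) h0', add_zero]
  tfae_have 2 → 3 := by
    intro h
    let A := Fintype.linearCombination (ZMod 2) (fun e : E => e.1)
    let B := Fintype.linearCombination (ZMod 2) (fun e : E => τ e.1)
    have key : ∀ (n : ℕ) (f : (Fin m → ZMod 2) → (Fin n → ZMod 2)) (c : E → ZMod 2),
        ∑ e ∈ (Finset.univ.filter fun e : E => c e = 1).map (Function.Embedding.subtype _), f e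
          = Fintype.linearCombination (ZMod 2) (fun e : E => f e.1) c := by
      intro n f c
      rw [Finset.sum_map, Finset.sum_filter, Fintype.linearCombination_apply]
      refine Finset.sum_congr rfl fun e _ => ?_
      have : ∀ x : ZMod 2, x = 0 ∨ x = 1 := by decide
      rcases this (c e) with h | h <;> simp [h]
    have hk : LinearMap.ker A ≤ LinearMap.ker B := by
      intro c hc
      rw [LinearMap.mem_ker] at hc ⊢
      have := h ((Finset.univ.filter fun e : E => c e = 1).map (Function.Embedding.subtype _))
        (by intro x hx; simp only [Finset.mem_map] at hx; obtain ⟨y, -, rfl⟩ := hx; exact y.2)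
        ((key m id c).trans hc)
      exact (key k τ c).symm.trans this
    obtain ⟨T, hT⟩ := LinearMap.exists_extend
      (((LinearMap.ker A).liftQ B hk).comp A.quotKerEquivRange.symm.toLinearMap)
    refine ⟨T, fun e he => ?_⟩
    have hA : A (Pi.single ⟨e, he⟩ 1) = e := by
      simp [A]
    have hB : B (Pi.single ⟨e, he⟩ 1) = τ e := by
      simp [B]
    have h3 := LinearMap.congr_fun hT ⟨A (Pi.single ⟨e, he⟩ 1), LinearMap.mem_range_self _ _⟩
    have h4 : A.quotKerEquivRange.symm ⟨A (Pi.single ⟨e, he⟩ 1), LinearMap.mem_range_self _ _⟩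
        = (LinearMap.ker A).mkQ (Pi.single ⟨e, he⟩ 1) :=
      LinearMap.quotKerEquivRange_symm_apply_image A _ _
    simp only [LinearMap.comp_apply, LinearEquiv.coe_coe, Submodule.subtype_apply] at h3
    rw [h4, Submodule.mkQ_apply, Submodule.liftQ_apply, hB] at h3
    rwa [hA] at h3
  tfae_have 3 → 1 := by
    rintro ⟨T, hT⟩ Z ⟨hZ, -, h0, -⟩
    rw [← Finset.sum_congr rfl fun e he => hT e (hZ he), ← map_sum, h0, map_zero]
  tfae_finish
end

section
/- Let F ⊆ (Fin k → ZMod 2) be a binary matroid and suppose there is a chain F = F_0 ⊇ F_1 ⊇ ⋯ ⊇ F_d of subsets such that F_d is a singleton and, for each i with 1 ≤ i ≤ d, there is a matroid homomorphism r_i : F_{i-1} → F_{i-1} whose image is contained in F_i, which fixes every point of F_i, and which is equal to or adjacent to the identity in the recolouring graph mCol(F_{i-1}, F_{i-1}) (i.e. F dismantles to a one-point matroid). Then for every binary matroid E ⊆ (Fin m → ZMod 2), any two matroid homomorphisms τ, τ' : E → F are joined by a walk in mCol(E, F). -/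
section Helpers
open Finset

theorem hlp_exists_circuit {P : Type*} [AddCommGroup P] (E : Finset P) (Z : Finset P)
    (hZ : Z ⊆ E) (hne : Z.Nonempty) (hs : ∑ e ∈ Z, e = 0) : ∃ Y ⊆ Z, IsCircuit E Y := by
  classical
  induction Z using Finset.strongInduction with
  | H Z ih =>
    by_cases h : ∃ Z' ⊂ Z, Z'.Nonempty ∧ ∑ e ∈ Z', e = 0
    · obtain ⟨Z', h1, h2, h3⟩ := h
      obtain ⟨Y, hY, hc⟩ := ih Z' h1 (h1.subset.trans hZ) h2 h3
      exact ⟨Y, hY.trans h1.subset, hc⟩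
    · refine ⟨Z, subset_rfl, hZ, hne, hs, fun Z' h1 h2 h3 => ?_⟩
      by_contra hn
      exact h ⟨Z', Finset.ssubset_iff_subset_ne.2 ⟨h1, hn⟩, h2, h3⟩

theorem hlp_cycle {P R : Type*} [AddCommGroup P] [AddCommGroup R] (E : Finset P) (g : P → R)
    (hg : ∀ Z, IsCircuit E Z → ∑ e ∈ Z, g e = 0) (Z : Finset P)
    (hZ : Z ⊆ E) (hs : ∑ e ∈ Z, e = 0) : ∑ e ∈ Z, g e = 0 := by
  classical
  induction Z using Finset.strongInduction with
  | H Z ih =>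
    rcases Z.eq_empty_or_nonempty with rfl | hne
    · simp
    obtain ⟨Y, hY, hc⟩ := hlp_exists_circuit E Z hZ hne hs
    have e1 := Finset.sum_sdiff (f := fun e : P => e) hY
    have e2 := Finset.sum_sdiff (f := g) hY
    rw [hs, hc.2.2.1, add_zero] at e1
    rw [← e2, hg Y hc, add_zero]
    exact ih _ (Finset.sdiff_ssubset hY hc.2.1) (Finset.sdiff_subset.trans hZ) e1

theorem hlp_nsmul {R : Type*} [AddCommGroup R] (h2 : ∀ x : R, x + x = 0) (n : ℕ) (x : R) :
    n • x = if Odd n then x else 0 := by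
  split_ifs with h
  · obtain ⟨j, rfl⟩ := h
    rw [add_smul, one_smul, mul_smul, two_smul, h2, zero_add]
  · obtain ⟨j, rfl⟩ := Nat.not_odd_iff_even.1 h
    rw [add_smul, h2]

theorem hlp_comp {P Q R : Type*} [AddCommGroup P] [AddCommGroup Q] [AddCommGroup R]
    (hQ : ∀ x : Q, x + x = 0) (hR : ∀ x : R, x + x = 0)
    (E : Finset P) (F : Finset Q) (τ : P → Q) (g : Q → R) (hτ : IsMHom E F τ)
    (hg : ∀ Z, IsCircuit F Z → ∑ e ∈ Z, g e = 0) (Z : Finset P) (hZ : IsCircuit E Z) :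
    ∑ e ∈ Z, g (τ e) = 0 := by
  classical
  have h1 := hτ.2 Z hZ
  have h1' : ∑ e ∈ Z, (fun y : Q => y) (τ e) = 0 := h1
  rw [Finset.sum_comp (fun y : Q => y) τ] at h1'
  rw [Finset.sum_comp g τ]
  simp only [hlp_nsmul hQ, hlp_nsmul hR, ← Finset.sum_filter] at h1' ⊢
  refine hlp_cycle F g hg _ ?_ h1'
  intro y hy
  obtain ⟨e, he, rfl⟩ := Finset.mem_image.1 (Finset.mem_filter.1 hy).1
  exact hτ.1 e (hZ.1 he)

/-- sum of indicator -/
theorem hlp_ind {P : Type*} [DecidableEq P] (C Z : Finset P) :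
    ∑ e ∈ Z, (if e ∈ C then (1 : ZMod 2) else 0) = 0 ↔ Even (C ∩ Z).card := by
  rw [Finset.sum_boole, ZMod.natCast_eq_zero_iff_even, Finset.filter_mem_eq_inter,
    Finset.inter_comm]

theorem hlp_exists_cocircuit {P : Type*} [AddCommGroup P] [DecidableEq P] (E : Finset P)
    (D : Finset P) (hD : D ⊆ E) (hne : D.Nonempty)
    (hs : ∀ Z, IsCircuit E Z → Even (D ∩ Z).card) : ∃ C ⊆ D, IsCocircuit E C := by
  induction D using Finset.strongInduction with
  | H D ih =>
    by_cases h : ∃ Z' ⊂ D, Z'.Nonempty ∧ ∀ Z, IsCircuit E Z → Even (Z' ∩ Z).card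
    · obtain ⟨Z', h1, h2, h3⟩ := h
      obtain ⟨Y, hY, hc⟩ := ih Z' h1 (h1.subset.trans hD) h2 h3
      exact ⟨Y, hY.trans h1.subset, hc⟩
    · refine ⟨D, subset_rfl, hD, hne, hs, fun Z' h1 h2 h3 => ?_⟩
      by_contra hn
      exact h ⟨Z', Finset.ssubset_iff_subset_ne.2 ⟨h1, hn⟩, h2, h3⟩

theorem hlp_shift {P Q : Type*} [AddCommGroup P] [AddCommGroup Q] [DecidableEq P]
    (hQ : ∀ x : Q, x + x = 0) (E : Finset P) (F : Finset Q) (c : Q) (D : Finset P)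
    (hs : ∀ Z, IsCircuit E Z → Even (D ∩ Z).card) (σ : P → Q) (hσ : IsMHom E F σ)
    (hF : ∀ e ∈ D, σ e + c ∈ F) : IsMHom E F (fun e => if e ∈ D then σ e + c else σ e) := by
  refine ⟨fun e he => ?_, fun Z hZ => ?_⟩
  · dsimp only
    split_ifs with h
    · exact hF e h
    · exact hσ.1 e he
  · have : ∀ e, (if e ∈ D then σ e + c else σ e) = σ e + if e ∈ D then c else 0 := by
      intro e; split_ifs <;> simp
    simp only [this]
    rw [Finset.sum_add_distrib, hσ.2 Z hZ, zero_add, ← Finset.sum_filter, Finset.sum_const,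
      Finset.filter_mem_eq_inter, Finset.inter_comm, hlp_nsmul hQ,
      if_neg (Nat.not_odd_iff_even.2 (hs Z hZ))]

theorem hlp_walk {P Q : Type*} [AddCommGroup P] [AddCommGroup Q] [DecidableEq P]
    (hQ : ∀ x : Q, x + x = 0) (E : Finset P) (F : Finset Q) (c : Q) (hc : c ≠ 0) (D : Finset P)
    (hD : D ⊆ E) (hs : ∀ Z, IsCircuit E Z → Even (D ∩ Z).card) (σ : P → Q) (hσ : IsMHom E F σ)
    (hF : ∀ e ∈ D, σ e + c ∈ F) :
    MWalk E F σ (fun e => if e ∈ D then σ e + c else σ e) := by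
  induction D using Finset.strongInduction generalizing σ with
  | H D ih =>
    rcases D.eq_empty_or_nonempty with rfl | hne
    · simp only [Finset.notMem_empty, if_false]
      exact Relation.ReflTransGen.refl
    obtain ⟨C, hCD, hC⟩ := hlp_exists_cocircuit E D hD hne hs
    have hσ1 := hlp_shift hQ E F c C hC.2.2.1 σ hσ (fun e he => hF e (hCD he))
    have hs' : ∀ Z, IsCircuit E Z → Even ((D \ C) ∩ Z).card := by
      intro Z hZ
      have e1 := Finset.card_sdiff_add_card_eq_card
        (Finset.inter_subset_inter_right hCD : C ∩ Z ⊆ D ∩ Z)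
      have e2 : (D ∩ Z) \ (C ∩ Z) = (D \ C) ∩ Z := by
        ext x; simp only [Finset.mem_sdiff, Finset.mem_inter]; tauto
      rw [e2] at e1
      have := hs Z hZ
      rw [← e1] at this
      exact (Nat.even_add.1 this).2 (hC.2.2.1 Z hZ)
    have hw := ih (D \ C) (Finset.sdiff_ssubset hCD hC.2.1) (Finset.sdiff_subset.trans hD) hs'
      _ hσ1 (by
        intro e he
        rw [Finset.mem_sdiff] at he
        simp only [he.2, if_false]
        exact hF e he.1)
    refine Relation.ReflTransGen.head (b := fun e => if e ∈ C then σ e + c else σ e)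
      ⟨hσ, hσ1, Or.inr ⟨C, hC, ?_⟩⟩ ?_
    · intro e _
      by_cases h : e ∈ C <;> simp [h, hc]
    · have hfun : (fun e => if e ∈ D then σ e + c else σ e) = (fun e => if e ∈ D \ C then
          (if e ∈ C then σ e + c else σ e) + c else (if e ∈ C then σ e + c else σ e)) := by
        funext e
        have := @hCD e
        by_cases h : e ∈ C <;> by_cases h' : e ∈ D <;> simp_all
      rw [hfun]
      exact hw

theorem hlp_symm {P Q : Type*} [AddCommGroup P] [AddCommGroup Q] [DecidableEq P]
    (E : Finset P) (F : Finset Q) {σ τ : P → Q} (h : MWalk E F σ τ) : MWalk E F τ σ := by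
  have key : ∀ a b, MStep E F a b → MStep E F b a := by
    rintro a b ⟨h1, h2, h3⟩
    refine ⟨h2, h1, h3.imp (fun h e he => (h e he).symm) ?_⟩
    rintro ⟨C, hC, h⟩
    exact ⟨C, hC, fun e he => by rw [← h e he]; exact ne_comm⟩
  induction h with
  | refl => exact Relation.ReflTransGen.refl
  | tail _ hs ih => exact Relation.ReflTransGen.head (key _ _ hs) ih

theorem hlp_const {k : ℕ} (F : Finset (Fin k → ZMod 2)) (C : Finset (Fin k → ZMod 2))
    (hC : IsCocircuit F C) (r : (Fin k → ZMod 2) → (Fin k → ZMod 2)) (hr : IsMHom F F r)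
    (h : ∀ e ∈ F, (e ≠ r e ↔ e ∈ C)) : ∃ c, c ≠ 0 ∧ ∀ x ∈ C, r x = x + c := by
  have h2 : ∀ x : Fin k → ZMod 2, x + x = 0 := fun x => by ext i; exact CharTwo.add_self_eq_zero _
  obtain ⟨x0, hx0⟩ := hC.2.1
  refine ⟨x0 + r x0, ?_, ?_⟩
  · intro h0
    apply (h x0 (hC.1 hx0)).2 hx0
    have : x0 + (x0 + r x0) = x0 := by rw [h0, add_zero]
    rw [← add_assoc, h2, zero_add] at this
    exact this.symm
  · intro x hx
    suffices x + r x = x0 + r x0 by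
      rw [← this, ← add_assoc, h2, zero_add]
    funext j
    have key : (∀ y ∈ C, (y + r y) j ≠ 1) ∨ (∀ y ∈ C, (y + r y) j = 1) := by
      by_cases hne : (C.filter fun y => (y + r y) j = 1).Nonempty
      · right
        have := hC.2.2.2 (C.filter fun y => (y + r y) j = 1) (Finset.filter_subset _ _) hne ?_
        · exact Finset.filter_eq_self.1 this
        · intro Z hZ
          rw [← hlp_ind]
          have e1 : ∑ e ∈ Z, (e + r e) = 0 := by
            rw [Finset.sum_add_distrib, hZ.2.2.1, hr.2 Z hZ, add_zero]
          have e2 := congrFun e1 j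
          rw [Finset.sum_apply] at e2
          refine Eq.trans ?_ e2
          refine Finset.sum_congr rfl fun e he => ?_
          by_cases heC : e ∈ C
          · have : ∀ z : ZMod 2, (if z = 1 then (1 : ZMod 2) else 0) = z := by decide
            simp only [Finset.mem_filter, heC, true_and]
            exact this _
          · have hre : e = r e := by
              by_contra hn
              exact heC ((h e (hZ.1 he)).1 hn)
            simp only [Finset.mem_filter, heC, false_and, if_false]
            rw [← hre, h2]; rfl
      · left
        intro y hy h1
        exact hne ⟨y, Finset.mem_filter.2 ⟨hy, h1⟩⟩
    have d2 : ∀ a b : ZMod 2, a ≠ 1 → b ≠ 1 → a = b := by decide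
    rcases key with h | h
    · exact d2 _ _ (h x hx) (h x0 hx0)
    · rw [h x hx, h x0 hx0]

theorem hlp_retract {k m : ℕ} (F : Finset (Fin k → ZMod 2)) (r : (Fin k → ZMod 2) → (Fin k → ZMod 2))
    (hr : IsMHom F F r)
    (h : (∀ e ∈ F, r e = e) ∨ MAdj F (id : (Fin k → ZMod 2) → (Fin k → ZMod 2)) r)
    (E : Finset (Fin m → ZMod 2)) (τ : (Fin m → ZMod 2) → (Fin k → ZMod 2)) (hτ : IsMHom E F τ) :
    MWalk E F τ (r ∘ τ) := by
  have h2 : ∀ x : Fin k → ZMod 2, x + x = 0 := fun x => by ext i; exact CharTwo.add_self_eq_zero _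
  have hrτ : IsMHom E F (r ∘ τ) :=
    ⟨fun e he => hr.1 _ (hτ.1 e he), hlp_comp h2 h2 E F τ r hτ hr.2⟩
  rcases h with h | ⟨C, hC, h⟩
  · exact Relation.ReflTransGen.single ⟨hτ, hrτ, Or.inl fun e he => (h _ (hτ.1 e he)).symm⟩
  · obtain ⟨c, hc, hcC⟩ := hlp_const F C hC r hr h
    have hs : ∀ Z, IsCircuit E Z → Even ((E.filter fun e => τ e ∈ C) ∩ Z).card := by
      intro Z hZ
      rw [← hlp_ind]
      refine Eq.trans ?_ (hlp_comp h2 (fun x : ZMod 2 => CharTwo.add_self_eq_zero x) E F τ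
        (fun y => if y ∈ C then (1 : ZMod 2) else 0) hτ
        (fun Z hZ => (hlp_ind C Z).2 (hC.2.2.1 Z hZ)) Z hZ)
      refine Finset.sum_congr rfl fun e he => ?_
      simp [hZ.1 he]
    have hF : ∀ e ∈ E.filter (fun e => τ e ∈ C), τ e + c ∈ F := by
      intro e he
      rw [Finset.mem_filter] at he
      rw [← hcC _ he.2]
      exact hr.1 _ (hτ.1 e he.1)
    have hw := hlp_walk h2 E F c hc (E.filter fun e => τ e ∈ C) (Finset.filter_subset _ _) hs τ hτ hF
    refine Relation.ReflTransGen.tail hw ⟨hlp_shift h2 E F c _ hs τ hτ hF, hrτ, Or.inl ?_⟩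
    intro e he
    by_cases hh : τ e ∈ C
    · simp [he, hh, hcC _ hh]
    · have := h (τ e) (hτ.1 e he)
      simp only [he, hh, Finset.mem_filter, and_false, if_false, Function.comp]
      by_contra hn
      exact hh (this.1 hn)

theorem hlp_mono {P Q : Type*} [AddCommGroup P] [AddCommGroup Q] [DecidableEq P]
    (E : Finset P) {F F' : Finset Q} (hF : F' ⊆ F) {σ τ : P → Q} (h : MWalk E F' σ τ) :
    MWalk E F σ τ := by
  refine Relation.ReflTransGen.mono ?_ _ _ h
  rintro a b ⟨h1, h2, h3⟩
  exact ⟨⟨fun e he => hF (h1.1 e he), h1.2⟩, ⟨fun e he => hF (h2.1 e he), h2.2⟩, h3⟩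

end Helpers

theorem stmt8 (k : ℕ) (F : Finset (Fin k → ZMod 2)) (d : ℕ)
    (Fs : ℕ → Finset (Fin k → ZMod 2))
    (h0 : Fs 0 = F)
    (hchain : ∀ i < d, Fs (i + 1) ⊆ Fs i)
    (hlast : (Fs d).card = 1)
    (hdis : ∀ i < d, ∃ r : (Fin k → ZMod 2) → (Fin k → ZMod 2),
      IsMHom (Fs i) (Fs i) r ∧ (∀ e ∈ Fs i, r e ∈ Fs (i + 1)) ∧
      (∀ e ∈ Fs (i + 1), r e = e) ∧
      ((∀ e ∈ Fs i, r e = e) ∨ MAdj (Fs i) (id : (Fin k → ZMod 2) → (Fin k → ZMod 2)) r))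
    (m : ℕ) (E : Finset (Fin m → ZMod 2))
    (τ τ' : (Fin m → ZMod 2) → (Fin k → ZMod 2))
    (hτ : IsMHom E F τ) (hτ' : IsMHom E F τ') :
    MWalk E F τ τ' := by
  have h2 : ∀ x : Fin k → ZMod 2, x + x = 0 := fun x => by ext i; exact CharTwo.add_self_eq_zero _
  have main : ∀ j i, i + j = d → ∀ τ τ' : (Fin m → ZMod 2) → (Fin k → ZMod 2),
      IsMHom E (Fs i) τ → IsMHom E (Fs i) τ' → MWalk E (Fs i) τ τ' := by
    intro j
    induction j with
    | zero =>
      intro i hi τ τ' h h'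
      rw [add_zero] at hi
      subst hi
      obtain ⟨a, ha⟩ := Finset.card_eq_one.1 hlast
      refine Relation.ReflTransGen.single ⟨h, h', Or.inl fun e he => ?_⟩
      have h1 := h.1 e he
      have h3 := h'.1 e he
      rw [ha, Finset.mem_singleton] at h1 h3
      rw [h1, h3]
    | succ j ih =>
      intro i hi τ τ' h h'
      have hid : i < d := by omega
      obtain ⟨r, hr, hr1, -, hr3⟩ := hdis i hid
      have hc : ∀ σ, IsMHom E (Fs i) σ → IsMHom E (Fs (i + 1)) (r ∘ σ) := fun σ hσ =>
        ⟨fun e he => hr1 _ (hσ.1 e he), hlp_comp h2 h2 E (Fs i) σ r hσ hr.2⟩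
      have w := hlp_mono E (hchain i hid) (ih (i + 1) (by omega) _ _ (hc τ h) (hc τ' h'))
      exact (Relation.ReflTransGen.trans (hlp_retract _ r hr hr3 E τ h) w).trans
        (hlp_symm _ _ (hlp_retract _ r hr hr3 E τ' h'))
  subst h0
  exact main d 0 (by omega) τ τ' hτ hτ'
end

section
/- Let G be a finite simple graph, let F be a finite set of distinct nonzero vectors in (Fin m → ZMod 2), and let D(F) be the decision graph of F. For every graph homomorphism φ : G → D(F), the map τ_φ from E_G to F sending 𝟙_u + 𝟙_v (for each edge uv of G) to φ(u) + φ(v) is well defined and is a matroid homomorphism from the graphic matroid M(G) to the binary matroid with point set F. -/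
theorem stmt11 {V : Type*} [Fintype V] [DecidableEq V] (m : ℕ)
    (G : SimpleGraph V) (F : Finset (Fin m → ZMod 2)) (hF : ∀ f ∈ F, f ≠ 0)
    (EG : Finset (V → ZMod 2))
    (hEG : ∀ x, x ∈ EG ↔ ∃ u v, G.Adj u v ∧ x = ind u + ind v)
    (φ : G →g decisionGraph F) :
    ∃ τ : (V → ZMod 2) → (Fin m → ZMod 2),
      (∀ u v, G.Adj u v → τ (ind u + ind v) = φ u + φ v) ∧
      IsMHom EG F τ := by
  have key : ∀ u, Fintype.linearCombination (ZMod 2) (fun v => (φ v : Fin m → ZMod 2)) (ind u) = φ u := by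
    intro u
    simp [ind, Fintype.linearCombination_apply_single]
  refine ⟨Fintype.linearCombination (ZMod 2) (fun v => (φ v : Fin m → ZMod 2)), ?_, ?_, ?_⟩
  · intro u v _
    rw [map_add, key, key]
  · intro e he
    obtain ⟨u, v, h, rfl⟩ := (hEG e).1 he
    rw [map_add, key, key]
    exact (φ.map_adj h).1
  · intro Z hZ
    rw [← map_sum, hZ.2.2.1, map_zero]
end
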